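/- arXiv:1704.00117 — 4 statements merged into one kernel-verified Lean document; each statement's English description precedes it below -/
import Mathlib

section
/- Let a : ℕ^d → ℝ be such that ∑_{α ∈ ℕ^d} |(Δ a)(α)| < ∞, and suppose a(α) converges to a limit ℓ ∈ ℝ as min_{1≤i≤d} α_i → ∞ (i.e., for every ε > 0 there exists M such that |a(α) − ℓ| ≤ ε whenever α_i ≥ M for all i). Then ∑_{α ∈ ℕ^d} (Δ a)(α) = ℓ. (This is the collapsing identity E[φ(X)] = ∑_{α ∈ ℕ_0^d} Δ E_α[φ_α(X_α)] of the paper.) -/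
/-- The coordinate difference operator `Δᵢ`: `(Δᵢ a)(α) = a(α) - a(α - eᵢ)` if `αᵢ > 0`,
and `(Δᵢ a)(α) = a(α)` if `αᵢ = 0`. -/
noncomputable def coordDiff {d : ℕ} (i : Fin d) (a : (Fin d → ℕ) → ℝ) :
    (Fin d → ℕ) → ℝ := fun α =>
  if α i = 0 then a α else a α - a (Function.update α i (α i - 1))

/-- The mixed difference operator `Δ = Δ_d ∘ ⋯ ∘ Δ_1`. -/
noncomputable def mixedDiff {d : ℕ} (a : (Fin d → ℕ) → ℝ) : (Fin d → ℕ) → ℝ :=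
  (List.finRange d).foldl (fun b i => coordDiff i b) a

/-- Partial summation in the coordinate `i`. -/
noncomputable def coordSum {d : ℕ} (i : Fin d) (b : (Fin d → ℕ) → ℝ) :
    (Fin d → ℕ) → ℝ := fun α =>
  ∑ k ∈ Finset.range (α i + 1), b (Function.update α i k)

theorem coordSum_coordDiff {d : ℕ} (i : Fin d) (a : (Fin d → ℕ) → ℝ) :
    coordSum i (coordDiff i a) = a := by
  funext α
  have key : ∀ n : ℕ, ∑ k ∈ Finset.range (n + 1), coordDiff i a (Function.update α i k)
      = a (Function.update α i n) := by
    intro n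
    induction n with
    | zero => simp [coordDiff]
    | succ n ih =>
      rw [Finset.sum_range_succ, ih]
      simp [coordDiff]
  simp [coordSum, key]

/-- The box of indices below `α` in the directions of `l`, frozen in the others. -/
def box {d : ℕ} (l : List (Fin d)) (α : Fin d → ℕ) : Finset (Fin d → ℕ) :=
  Fintype.piFinset (fun i => if i ∈ l then Finset.range (α i + 1) else {α i})

theorem foldr_coordSum_foldl {d : ℕ} (l : List (Fin d)) (a : (Fin d → ℕ) → ℝ) :
    l.foldr coordSum (l.foldl (fun b i => coordDiff i b) a) = a := by
  induction l generalizing a with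
  | nil => rfl
  | cons i l ih =>
    rw [List.foldr_cons, List.foldl_cons, ih, coordSum_coordDiff]

theorem foldr_coordSum_eq {d : ℕ} (l : List (Fin d)) (hl : l.Nodup) (b : (Fin d → ℕ) → ℝ)
    (α : Fin d → ℕ) : l.foldr coordSum b α = ∑ γ ∈ box l α, b γ := by
  induction l generalizing α with
  | nil =>
    have : box [] α = {α} := by
      ext γ
      simp [box, funext_iff]
    simp [this]
  | cons i l ih =>
    rw [List.nodup_cons] at hl
    rw [List.foldr_cons, coordSum]
    rw [← Finset.sum_fiberwise_of_maps_to (s := box (i :: l) α)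
      (t := Finset.range (α i + 1)) (g := fun γ => γ i)]
    · refine Finset.sum_congr rfl fun k hk => ?_
      rw [ih hl.2]
      refine Finset.sum_congr ?_ fun _ _ => rfl
      ext γ
      simp only [box, Fintype.mem_piFinset, Finset.mem_filter]
      constructor
      · intro h
        have hi : γ i = k := by simpa [hl.1] using h i
        refine ⟨fun j => ?_, hi⟩
        by_cases hj : j = i
        · subst hj
          simpa [hi] using hk
        · simpa [hj] using h j
      · rintro ⟨h, hi⟩ j
        by_cases hj : j = i
        · subst hj
          simp [hl.1, hi]
        · simpa [hj] using h j
    · intro γ hγ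
      simpa using (Fintype.mem_piFinset.1 hγ) i

theorem sum_mixedDiff {d : ℕ} (a : (Fin d → ℕ) → ℝ) (α : Fin d → ℕ) :
    ∑ γ ∈ Finset.Iic α, mixedDiff a γ = a α := by
  have h := foldr_coordSum_eq (List.finRange d) (List.nodup_finRange d) (mixedDiff a) α
  have hb : box (List.finRange d) α = Finset.Iic α := by
    ext γ
    simp [box, Pi.le_def, Nat.lt_succ_iff]
  rw [← hb, ← h, mixedDiff, foldr_coordSum_foldl]

/-- If `∑_{α ∈ ℕ^d} |(Δ a)(α)| < ∞` and `a(α) → ℓ` as `min_i αᵢ → ∞`,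
then `∑_{α ∈ ℕ^d} (Δ a)(α) = ℓ` (the collapsing identity). -/
theorem tsum_mixedDiff_eq_limit {d : ℕ} (hd : 1 ≤ d) (a : (Fin d → ℕ) → ℝ) (ℓ : ℝ)
    (hsum : Summable fun α : Fin d → ℕ => |mixedDiff a α|)
    (hlim : ∀ ε : ℝ, 0 < ε → ∃ M : ℕ, ∀ α : Fin d → ℕ, (∀ i, M ≤ α i) → |a α - ℓ| ≤ ε) :
    ∑' α : Fin d → ℕ, mixedDiff a α = ℓ := by
  have h1 : Filter.Tendsto (fun α : Fin d → ℕ => ∑ γ ∈ Finset.Iic α, mixedDiff a γ)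
      Filter.atTop (nhds (∑' α : Fin d → ℕ, mixedDiff a α)) := by
    refine hsum.of_abs.hasSum.comp ?_
    refine Filter.tendsto_atTop_finset_of_monotone ?_ fun x => ⟨x, by simp⟩
    intro x y hxy
    exact Finset.Iic_subset_Iic.2 hxy
  have h2 : Filter.Tendsto a Filter.atTop (nhds ℓ) := by
    rw [Metric.tendsto_atTop]
    intro ε hε
    obtain ⟨M, hM⟩ := hlim (ε / 2) (half_pos hε)
    refine ⟨fun _ => M, fun α hα => ?_⟩
    rw [Real.dist_eq]
    exact lt_of_le_of_lt (hM α hα) (half_lt_self hε)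
  simp only [sum_mixedDiff] at h1
  exact tendsto_nhds_unique h1 h2
end

section
/- (Lemma A.1, variance of the multi-increment.) Let Q be a probability measure on a measurable space Z, let G : Z → ℝ be measurable with 0 < C̲ ≤ G(z) ≤ C̄ for all z, set Z_G = ∫ G dQ and define the tilted probability measure Π(dz) = (G(z)/Z_G) Q(dz). Let φ : Z → ℝ be bounded and measurable, and suppose there are constants C₁, C₂ ≥ 0 such that (i) |E_Q[f·φ]| ≤ C₁ for every measurable f : Z → ℝ with |f(z)| ≤ 1 for all z, and (ii) Var_Q[φ] ≤ C₂². Then there exists a constant C < ∞, depending only on C̲ and C̄ (and not on φ, C₁, C₂), such that Var_Π[φ] ≤ C · max{C₁², C₂², C₁C₂}. -/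
open MeasureTheory ProbabilityTheory

universe u

/-- Lemma A.1, variance of the multi-increment: there is a constant `C`
depending only on `C̲, C̄` such that for any bounded measurable `φ` satisfying
`|E_Q[f·φ]| ≤ C₁` for all measurable `|f| ≤ 1` and `Var_Q[φ] ≤ C₂²`, the variance under
the tilted measure satisfies `Var_Π[φ] ≤ C max{C₁², C₂², C₁C₂}`. -/
theorem variance_of_multi_increment (Cl Cu : ℝ) (hCl : 0 < Cl) (hClCu : Cl ≤ Cu) :
    ∃ C : ℝ, ∀ (Z : Type u) (_ : MeasurableSpace Z)
      (Q : Measure Z) (_ : IsProbabilityMeasure Q)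
      (G : Z → ℝ), Measurable G → (∀ z, Cl ≤ G z ∧ G z ≤ Cu) →
      ∀ ZG : ℝ, ZG = ∫ z, G z ∂Q →
      ∀ PiM : Measure Z, PiM = Q.withDensity (fun z => ENNReal.ofReal (G z / ZG)) →
      ∀ φ : Z → ℝ, Measurable φ → (∃ M : ℝ, ∀ z, |φ z| ≤ M) →
      ∀ C₁ C₂ : ℝ, 0 ≤ C₁ → 0 ≤ C₂ →
      (∀ f : Z → ℝ, Measurable f → (∀ z, |f z| ≤ 1) → |∫ z, f z * φ z ∂Q| ≤ C₁) →
      variance φ Q ≤ C₂ ^ 2 →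
      variance φ PiM ≤ C * max (max (C₁ ^ 2) (C₂ ^ 2)) (C₁ * C₂) := by
  refine ⟨Cu / Cl, ?_⟩
  intro Z _ Q _ G hG hGb ZG hZG PiM hPi φ hφ hM C₁ C₂ hC₁ hC₂ _ hvar
  obtain ⟨M, hM⟩ := hM
  have hGint : Integrable G Q := by
    refine Integrable.of_bound hG.aestronglyMeasurable Cu (Filter.Eventually.of_forall fun z => ?_)
    rw [Real.norm_eq_abs, abs_of_nonneg (hCl.le.trans (hGb z).1)]
    exact (hGb z).2
  have hZl : Cl ≤ ZG := by
    have h := integral_mono (integrable_const Cl) hGint (fun z => (hGb z).1)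
    simpa [hZG] using h
  have hZpos : 0 < ZG := hCl.trans_le hZl
  have hd0 : ∀ z, 0 ≤ G z / ZG := fun z => div_nonneg (hCl.le.trans (hGb z).1) hZpos.le
  have hprob : IsProbabilityMeasure PiM := by
    constructor
    rw [hPi, withDensity_apply _ MeasurableSet.univ, Measure.restrict_univ,
      ← ofReal_integral_eq_lintegral_ofReal (hGint.div_const ZG)
        (Filter.Eventually.of_forall hd0), integral_div, ← hZG, div_self hZpos.ne']
    simp
  set m : ℝ := ∫ z, φ z ∂Q with hm
  have hsqint : Integrable (fun z => (φ z - m) ^ 2) Q := by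
    refine Integrable.of_bound ((hφ.sub_const m).pow_const 2).aestronglyMeasurable
      ((M + |m|) ^ 2) (Filter.Eventually.of_forall fun z => ?_)
    rw [Real.norm_eq_abs, abs_pow]
    have h1 : |φ z - m| ≤ M + |m| := (abs_sub _ _).trans (by linarith [hM z])
    gcongr
  have h1 : variance φ PiM ≤ ∫ z, (φ z - m) ^ 2 ∂PiM := by
    rw [← variance_sub_const (X := φ) (μ := PiM) hφ.aestronglyMeasurable m]
    exact variance_le_expectation_sq (hφ.sub_const m).aestronglyMeasurable
  have h2 : ∫ z, (φ z - m) ^ 2 ∂PiM = ∫ z, (G z / ZG) * (φ z - m) ^ 2 ∂Q := by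
    rw [hPi, integral_withDensity_eq_integral_toReal_smul
      (hG.div_const ZG).ennreal_ofReal (Filter.Eventually.of_forall fun z => ENNReal.ofReal_lt_top)]
    refine integral_congr_ae (Filter.Eventually.of_forall fun z => ?_)
    simp only [ENNReal.toReal_ofReal (hd0 z), smul_eq_mul]
  have h3 : ∫ z, (G z / ZG) * (φ z - m) ^ 2 ∂Q ≤ ∫ z, (Cu / Cl) * (φ z - m) ^ 2 ∂Q := by
    refine integral_mono_of_nonneg (Filter.Eventually.of_forall fun z =>
      mul_nonneg (hd0 z) (sq_nonneg _)) (hsqint.const_mul _) (Filter.Eventually.of_forall fun z => ?_)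
    exact mul_le_mul_of_nonneg_right
      (div_le_div₀ (hCl.le.trans hClCu) (hGb z).2 hCl hZl) (sq_nonneg _)
  have h4 : ∫ z, (Cu / Cl) * (φ z - m) ^ 2 ∂Q = Cu / Cl * variance φ Q := by
    rw [integral_const_mul, variance_eq_integral hφ.aemeasurable]
  have h5 : variance φ Q ≤ max (max (C₁ ^ 2) (C₂ ^ 2)) (C₁ * C₂) :=
    hvar.trans ((le_max_right _ _).trans (le_max_left _ _))
  have h6 := mul_le_mul_of_nonneg_left h5 (div_nonneg (hCl.le.trans hClCu) hCl.le)
  linarith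
end

section
/- (Proposition 3.1, main variance result for the MIMCMC simplified estimator.) Let d ≥ 1, S = {0,1}^d, and for each s ∈ S let X_s be a measurable space; set Z = ∏_{s ∈ S} X_s. Let Q be a probability measure on Z. For each s ∈ S let g_s : X_s → ℝ be measurable with 0 < C̲ ≤ g_s ≤ C̄; define G(z) = max_{s ∈ S} g_s(z_s), Z_G = ∫ G dQ, the tilted probability measure Π(dz) = (G(z)/Z_G) Q(dz), and H_s(z) = g_s(z_s)/G(z). For each s ∈ S let φ_s : X_s → ℝ be measurable with |φ_s| ≤ M, and define the normalized signed multi-increment ψ(z) = ∑_{s ∈ S} (−1)^{s_1+⋯+s_d} φ_s(z_s) H_s(z) / E_Π[H_s] and the target T = E_Π[ψ] = ∑_{s ∈ S} (−1)^{s_1+⋯+s_d} E_Π[φ_s(z_s) H_s(z)] / E_Π[H_s(z)]. Assume: (A2′) there are constants C₁, C₂ ≥ 0 such that |E_Q[f·ψ]| ≤ C₁ for every measurable f : Z → ℝ with |f| ≤ 1, and Var_Q[ψ] ≤ C₂²; (A3) K is a Markov kernel on Z which is Π-reversible and satisfies K(z, A) ≥ ξ ν(A) for all z and measurable A, for some ξ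 ∈ (0,1) and probability measure ν. Let (Z_j)_{j≥1} be the stationary Markov chain with initial law Π and transition kernel K. Then there exists a constant C < ∞, depending only on d, C̲, C̄, M and ξ (and not on C₁, C₂, N), such that for every N ≥ 1, E[((1/N) ∑_{j=1}^N ψ(Z_j) − T)²] ≤ C · max{C₁², C₂², C₁C₂} / N. -/
open MeasureTheory ProbabilityTheory
open scoped ENNReal

universe u

/-- The law of the first `n+1` steps `(Z_0, …, Z_n)` of the Markov chain with initial
distribution `Π` and transition kernel `K` (the finite-dimensional marginals of the
Ionescu–Tulcea path measure). -/
noncomputable def chainFinLaw {Z : Type u} [MeasurableSpace Z] (PiM : Measure Z)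
    (K : Kernel Z Z) : (n : ℕ) → Measure (Fin (n + 1) → Z)
  | 0 => PiM.map fun z => fun _ => z
  | n + 1 =>
    ((chainFinLaw PiM K n).compProd
        (K.comap (fun v => v (Fin.last n)) (measurable_pi_apply _))).map
      fun q => Fin.snoc q.1 q.2

/-- Bounded measurable real functions. -/
def BM {Z : Type*} [MeasurableSpace Z] (f : Z → ℝ) : Prop :=
  Measurable f ∧ ∃ B : ℝ, ∀ x, |f x| ≤ B

namespace BM

variable {Z : Type*} [MeasurableSpace Z] {f g : Z → ℝ}

lemma integrable (hf : BM f) (μ : Measure Z) [IsFiniteMeasure μ] : Integrable f μ := by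
  obtain ⟨hm, B, hB⟩ := hf
  exact Integrable.of_bound hm.aestronglyMeasurable B (Filter.Eventually.of_forall hB)

lemma mul (hf : BM f) (hg : BM g) : BM (fun x => f x * g x) := by
  obtain ⟨hm, B, hB⟩ := hf
  obtain ⟨hm', B', hB'⟩ := hg
  refine ⟨hm.mul hm', B * B', fun x => ?_⟩
  rw [abs_mul]
  exact mul_le_mul (hB x) (hB' x) (abs_nonneg _) ((abs_nonneg _).trans (hB x))

lemma add (hf : BM f) (hg : BM g) : BM (fun x => f x + g x) := by
  obtain ⟨hm, B, hB⟩ := hf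
  obtain ⟨hm', B', hB'⟩ := hg
  exact ⟨hm.add hm', B + B', fun x => (abs_add_le _ _).trans (add_le_add (hB x) (hB' x))⟩

lemma const (c : ℝ) : BM (fun _ : Z => c) := ⟨measurable_const, |c|, fun _ => le_rfl⟩

lemma sub (hf : BM f) (hg : BM g) : BM (fun x => f x - g x) := by
  have h := hf.add ((BM.const (Z := Z) (-1)).mul hg)
  convert h using 2
  ring

lemma sq (hf : BM f) : BM (fun x => f x ^ 2) := by
  simpa [pow_two] using hf.mul hf

lemma sum {ι : Type*} (s : Finset ι) {F : ι → Z → ℝ} (hF : ∀ i, BM (F i)) :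
    BM (fun x => ∑ i ∈ s, F i x) := by
  classical
  induction s using Finset.induction_on with
  | empty => simpa using BM.const (Z := Z) 0
  | insert a s ha ih =>
    have := (hF a).add ih
    simpa [Finset.sum_insert ha] using this

lemma comp {Y : Type*} [MeasurableSpace Y] (hf : BM f) {k : Y → Z} (hk : Measurable k) :
    BM (fun y => f (k y)) := by
  obtain ⟨hm, B, hB⟩ := hf
  exact ⟨hm.comp hk, B, fun x => hB _⟩

lemma kernel (hf : BM f) (K : Kernel Z Z) [IsMarkovKernel K] :
    BM (fun x => ∫ y, f y ∂(K x)) := by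
  obtain ⟨hm, B, hB⟩ := hf
  refine ⟨(StronglyMeasurable.integral_kernel hm.stronglyMeasurable).measurable, B, fun x => ?_⟩
  have := norm_integral_le_of_norm_le_const (μ := K x) (f := f) (C := B)
    (Filter.Eventually.of_forall hB)
  simpa using this

/-- Cauchy–Schwarz for bounded functions. -/
lemma cauchy (hf : BM f) (hg : BM g) (μ : Measure Z) [IsFiniteMeasure μ] :
    |∫ x, f x * g x ∂μ| ≤ √(∫ x, f x ^ 2 ∂μ) * √(∫ x, g x ^ 2 ∂μ) := by
  have hq : ∀ t : ℝ, 0 ≤ (∫ x, g x ^ 2 ∂μ) * (t * t) + (2 * ∫ x, f x * g x ∂μ) * t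
      + ∫ x, f x ^ 2 ∂μ := by
    intro t
    have h0 : 0 ≤ ∫ x, (g x ^ 2 * (t * t) + (f x * g x) * (2 * t) + f x ^ 2) ∂μ := by
      apply integral_nonneg
      intro x
      have : g x ^ 2 * (t * t) + (f x * g x) * (2 * t) + f x ^ 2 = (f x + t * g x) ^ 2 := by ring
      simp only [this]
      positivity
    rw [integral_add (((hg.sq.mul (const _)).add ((hf.mul hg).mul (const _))).integrable μ)
      (hf.sq.integrable μ), integral_add ((hg.sq.mul (const _)).integrable μ)
      (((hf.mul hg).mul (const _)).integrable μ), integral_mul_const, integral_mul_const] at h0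
    linarith
  have hd := discrim_le_zero hq
  rw [discrim] at hd
  rw [← Real.sqrt_mul (integral_nonneg fun x => sq_nonneg _)]
  apply Real.abs_le_sqrt
  nlinarith

end BM

section chain

variable {Z : Type u} [MeasurableSpace Z] {PiM : Measure Z} {K : Kernel Z Z}

lemma measurable_snoc_pair (n : ℕ) :
    Measurable (fun q : (Fin (n + 1) → Z) × Z =>
      (Fin.snoc q.1 q.2 : Fin (n + 1 + 1) → Z)) := by
  rw [measurable_pi_iff]
  intro i
  refine Fin.lastCases ?_ (fun j => ?_) i
  · simpa using measurable_snd
  · simp only [Fin.snoc_castSucc]; fun_prop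

lemma chain_prob [IsProbabilityMeasure PiM] [IsMarkovKernel K] (n : ℕ) :
    IsProbabilityMeasure (chainFinLaw PiM K n) := by
  induction n with
  | zero =>
    rw [chainFinLaw]
    exact Measure.isProbabilityMeasure_map (by fun_prop)
  | succ n ih =>
    rw [chainFinLaw]
    exact Measure.isProbabilityMeasure_map (measurable_snoc_pair n).aemeasurable

lemma chain_step [IsProbabilityMeasure PiM] [IsMarkovKernel K] (n : ℕ)
    {F : (Fin (n + 1) → Z) → ℝ} {f : Z → ℝ} (hF : BM F) (hf : BM f) :
    ∫ v, F (fun i => v i.castSucc) * f (v (Fin.last (n + 1))) ∂(chainFinLaw PiM K (n + 1)) =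
      ∫ w, F w * ∫ y, f y ∂(K (w (Fin.last n))) ∂(chainFinLaw PiM K n) := by
  have := chain_prob (PiM := PiM) (K := K) n
  have hb : BM (fun q : (Fin (n + 1) → Z) × Z => F q.1 * f q.2) :=
    (hF.comp measurable_fst).mul (hf.comp measurable_snd)
  have hbig : BM (fun v : Fin (n + 1 + 1) → Z =>
      F (fun i => v i.castSucc) * f (v (Fin.last (n + 1)))) :=
    (hF.comp (by fun_prop)).mul (hf.comp (by fun_prop))
  rw [chainFinLaw, integral_map (measurable_snoc_pair n).aemeasurable
    hbig.1.aestronglyMeasurable]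
  simp only [Fin.snoc_castSucc, Fin.snoc_last]
  rw [Measure.integral_compProd (hb.integrable _)]
  simp only [integral_const_mul, Kernel.comap_apply]

lemma inv_integral [IsProbabilityMeasure PiM] [IsMarkovKernel K] (hinv : PiM.bind K = PiM)
    {f : Z → ℝ} (hf : BM f) : ∫ x, ∫ y, f y ∂(K x) ∂PiM = ∫ x, f x ∂PiM := by
  have h := Measure.integral_compProd (μ := PiM) (κ := K) (f := fun q : Z × Z => f q.2)
    ((hf.comp measurable_snd).integrable _)
  simp only at h
  rw [← h]
  conv_rhs => rw [← hinv, ← Measure.snd_compProd, Measure.snd]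
  rw [integral_map measurable_snd.aemeasurable hf.1.aestronglyMeasurable]

lemma chain_last [IsProbabilityMeasure PiM] [IsMarkovKernel K] (hinv : PiM.bind K = PiM)
    (n : ℕ) : ∀ {f : Z → ℝ}, BM f →
    ∫ v, f (v (Fin.last n)) ∂(chainFinLaw PiM K n) = ∫ x, f x ∂PiM := by
  induction n with
  | zero =>
    intro f hf
    rw [chainFinLaw, integral_map (by fun_prop)
      (hf.comp (measurable_pi_apply _)).1.aestronglyMeasurable]
  | succ n ih =>
    intro f hf
    have h := chain_step (PiM := PiM) (K := K) n (BM.const 1) hf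
    simp only [one_mul] at h
    rw [h, ih (hf.kernel K), inv_integral hinv hf]

/-- One step `L²` contraction from the minorization. -/
lemma contract [IsProbabilityMeasure PiM] [IsMarkovKernel K] (hinv : PiM.bind K = PiM)
    {ξ : ℝ} (h0 : 0 < ξ) (h1 : ξ < 1) (ν : Measure Z) [IsProbabilityMeasure ν]
    (hmin : ∀ z A, MeasurableSet A → ENNReal.ofReal ξ * ν A ≤ K z A)
    {f : Z → ℝ} (hf : BM f) (hmean : ∫ x, f x ∂PiM = 0) :
    ∫ x, (∫ y, f y ∂(K x)) ^ 2 ∂PiM ≤ (1 - ξ) * ∫ x, f x ^ 2 ∂PiM := by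
  set c := ξ * ∫ y, f y ∂ν with hc
  have hpt : ∀ x, ((∫ y, f y ∂(K x)) - c) ^ 2 ≤ (1 - ξ) * ∫ y, f y ^ 2 ∂(K x) := by
    intro x
    have hle : ENNReal.ofReal ξ • ν ≤ K x := Measure.le_iff.2 fun A hA => by
      simpa using hmin x A hA
    set t := ((∫ y, f y ∂(K x)) - c) / (1 - ξ) with ht
    have hb : BM (fun y => (f y - t) ^ 2) := (hf.sub (BM.const t)).sq
    have hexp : ∀ (μ : Measure Z) [IsProbabilityMeasure μ], ∫ y, (f y - t) ^ 2 ∂μ =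
        ∫ y, f y ^ 2 ∂μ - 2 * t * ∫ y, f y ∂μ + t ^ 2 := by
      intro μ _
      have : ∀ y, (f y - t) ^ 2 = f y ^ 2 - 2 * t * f y + t ^ 2 := fun y => by ring
      simp only [this]
      rw [integral_add ((hf.sq.sub ((BM.const _).mul hf)).integrable μ)
        ((BM.const _).integrable μ), integral_sub (hf.sq.integrable μ)
        (((BM.const _).mul hf).integrable μ), integral_const_mul]
      simp
    have hi := integral_mono_measure hle
      (Filter.Eventually.of_forall fun y => sq_nonneg (f y - t)) (hb.integrable (K x))
    rw [integral_smul_measure, ENNReal.toReal_ofReal h0.le, hexp, hexp, smul_eq_mul] at hi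
    have hν : 0 ≤ ∫ y, f y ^ 2 ∂ν := integral_nonneg fun y => sq_nonneg _
    have h1' : 0 < 1 - ξ := by linarith
    have htt : (∫ y, f y ∂(K x)) - c = t * (1 - ξ) := by rw [ht]; field_simp
    have hk : 0 ≤ ∫ y, f y ^ 2 ∂(K x) - t ^ 2 * (1 - ξ) := by
      have := mul_nonneg h0.le hν
      have e : ∫ y, f y ∂(K x) = t * (1 - ξ) + ξ * ∫ y, f y ∂ν := by rw [← htt, hc]; ring
      rw [e] at hi
      nlinarith
    rw [htt]
    nlinarith [mul_nonneg h1'.le hk]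
  have hKf := hf.kernel K
  have hint := integral_mono ((hKf.sub (BM.const c)).sq.integrable PiM)
    (((BM.const (1 - ξ)).mul (hf.sq.kernel K)).integrable PiM) hpt
  rw [integral_const_mul, inv_integral hinv hf.sq] at hint
  have hexp : ∫ x, ((∫ y, f y ∂(K x)) - c) ^ 2 ∂PiM =
      ∫ x, (∫ y, f y ∂(K x)) ^ 2 ∂PiM + c ^ 2 := by
    have : ∀ x, ((∫ y, f y ∂(K x)) - c) ^ 2 =
        (∫ y, f y ∂(K x)) ^ 2 - 2 * c * (∫ y, f y ∂(K x)) + c ^ 2 := fun y => by ring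
    simp only [this]
    rw [integral_add ((hKf.sq.sub ((BM.const _).mul hKf)).integrable PiM)
      ((BM.const _).integrable PiM), integral_sub (hKf.sq.integrable PiM)
      (((BM.const _).mul hKf).integrable PiM), integral_const_mul, inv_integral hinv hf, hmean]
    simp
  rw [hexp] at hint
  nlinarith [sq_nonneg c]

lemma chain_cross [IsProbabilityMeasure PiM] [IsMarkovKernel K] (hinv : PiM.bind K = PiM)
    {ξ : ℝ} (h0 : 0 < ξ) (h1 : ξ < 1) (ν : Measure Z) [IsProbabilityMeasure ν]
    (hmin : ∀ z A, MeasurableSet A → ENNReal.ofReal ξ * ν A ≤ K z A)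
    {h : Z → ℝ} (hh : BM h) (n : ℕ) :
    ∀ {f : Z → ℝ}, BM f → ∫ x, f x ∂PiM = 0 →
    |∫ v, (∑ i, h (v i)) * f (v (Fin.last n)) ∂(chainFinLaw PiM K n)| ≤
      1 / (1 - √(1 - ξ)) * (√(∫ x, h x ^ 2 ∂PiM) * √(∫ x, f x ^ 2 ∂PiM)) := by
  have hr0 : 0 ≤ √(1 - ξ) := Real.sqrt_nonneg _
  have hr1 : √(1 - ξ) < 1 := by
    rw [Real.sqrt_lt' one_pos]; linarith
  have hr1' : 0 < 1 - √(1 - ξ) := by linarith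
  induction n with
  | zero =>
    intro f hf _
    have := chain_last (K := K) hinv 0 (hh.mul hf)
    have e : ∀ v : Fin (0 + 1) → Z, (∑ i, h (v i)) * f (v (Fin.last 0)) =
        h (v (Fin.last 0)) * f (v (Fin.last 0)) := by
      intro v
      simp
    simp only [e]
    rw [this]
    refine (hh.cauchy hf PiM).trans ?_
    refine le_mul_of_one_le_left (by positivity) ?_
    rw [le_div_iff₀ hr1']
    linarith
  | succ n ih =>
    intro f hf hm
    have hp := chain_prob (PiM := PiM) (K := K) (n + 1)
    have hS : BM (fun w : Fin (n + 1) → Z => ∑ i, h (w i)) :=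
      BM.sum _ fun i => hh.comp (measurable_pi_apply i)
    have e : ∀ v : Fin (n + 1 + 1) → Z, (∑ i, h (v i)) * f (v (Fin.last (n + 1))) =
        (∑ i : Fin (n + 1), h (v i.castSucc)) * f (v (Fin.last (n + 1))) +
        h (v (Fin.last (n + 1))) * f (v (Fin.last (n + 1))) := by
      intro v
      rw [Fin.sum_univ_castSucc]; ring
    simp only [e]
    have hm1 : Measurable (fun v : Fin (n + 1 + 1) → Z => fun i : Fin (n + 1) => v i.castSucc) := by
      fun_prop
    have hm2 : Measurable (fun v : Fin (n + 1 + 1) → Z => v (Fin.last (n + 1))) := by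
      fun_prop
    rw [integral_add (((hS.comp hm1).mul (hf.comp hm2)).integrable _)
      (((hh.comp hm2).mul (hf.comp hm2)).integrable _)]
    rw [chain_step n hS hf, chain_last hinv (n + 1) (hh.mul hf)]
    have i1 := ih (hf.kernel K) (by rw [inv_integral hinv hf, hm])
    have i2 := hh.cauchy hf PiM
    have i3 : √(∫ x, (∫ y, f y ∂(K x)) ^ 2 ∂PiM) ≤ √(1 - ξ) * √(∫ x, f x ^ 2 ∂PiM) := by
      rw [← Real.sqrt_mul (by linarith)]
      exact Real.sqrt_le_sqrt (contract hinv h0 h1 ν hmin hf hm)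
    refine (abs_add_le _ _).trans ((add_le_add i1 i2).trans ?_)
    have hH := Real.sqrt_nonneg (∫ x, h x ^ 2 ∂PiM)
    have i4 : 1 / (1 - √(1 - ξ)) * (√(∫ x, h x ^ 2 ∂PiM) * √(∫ x, (∫ y, f y ∂(K x)) ^ 2 ∂PiM))
      ≤ 1 / (1 - √(1 - ξ)) * (√(∫ x, h x ^ 2 ∂PiM) * (√(1 - ξ) * √(∫ x, f x ^ 2 ∂PiM))) := by
      gcongr
    refine (add_le_add_left i4 _).trans (le_of_eq ?_)
    field_simp
    ring

lemma chain_var [IsProbabilityMeasure PiM] [IsMarkovKernel K] (hinv : PiM.bind K = PiM)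
    {ξ : ℝ} (h0 : 0 < ξ) (h1 : ξ < 1) (ν : Measure Z) [IsProbabilityMeasure ν]
    (hmin : ∀ z A, MeasurableSet A → ENNReal.ofReal ξ * ν A ≤ K z A)
    {h : Z → ℝ} (hh : BM h) (hm : ∫ x, h x ∂PiM = 0) (n : ℕ) :
    ∫ v, (∑ i, h (v i)) ^ 2 ∂(chainFinLaw PiM K n) ≤
      (n + 1) * ((1 + 2 / (1 - √(1 - ξ))) * ∫ x, h x ^ 2 ∂PiM) := by
  have hr0 : 0 ≤ √(1 - ξ) := Real.sqrt_nonneg _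
  have hr1 : √(1 - ξ) < 1 := by
    rw [Real.sqrt_lt' one_pos]; linarith
  have hr1' : 0 < 1 - √(1 - ξ) := by linarith
  have hnn : 0 ≤ ∫ x, h x ^ 2 ∂PiM := integral_nonneg fun x => sq_nonneg _
  have hdiv : 0 ≤ 1 / (1 - √(1 - ξ)) := by positivity
  induction n with
  | zero =>
    have := chain_last (K := K) hinv 0 hh.sq
    have e : ∀ v : Fin (0 + 1) → Z, (∑ i, h (v i)) ^ 2 = h (v (Fin.last 0)) ^ 2 := by
      intro v
      simp
    simp only [e]
    rw [this]
    have : 0 ≤ 2 / (1 - √(1 - ξ)) := by positivity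
    have := mul_nonneg this hnn
    push_cast
    linarith
  | succ n ih =>
    have hp := chain_prob (PiM := PiM) (K := K) (n + 1)
    have hS : BM (fun w : Fin (n + 1) → Z => ∑ i, h (w i)) :=
      BM.sum _ fun i => hh.comp (measurable_pi_apply i)
    have e : ∀ v : Fin (n + 1 + 1) → Z, (∑ i, h (v i)) ^ 2 =
        (∑ i : Fin (n + 1), h (v i.castSucc)) ^ 2 * 1 +
        2 * ((∑ i : Fin (n + 1), h (v i.castSucc)) * h (v (Fin.last (n + 1)))) +
        h (v (Fin.last (n + 1))) ^ 2 := by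
      intro v
      rw [Fin.sum_univ_castSucc]; ring
    simp only [e]
    have hm1 : Measurable (fun v : Fin (n + 1 + 1) → Z => fun i : Fin (n + 1) => v i.castSucc) := by
      fun_prop
    have hm2 : Measurable (fun v : Fin (n + 1 + 1) → Z => v (Fin.last (n + 1))) := by
      fun_prop
    have b1 : BM (fun v : Fin (n + 1 + 1) → Z =>
        (∑ i : Fin (n + 1), h (v i.castSucc)) ^ 2 * 1) :=
      ((hS.comp hm1).sq).mul (BM.const 1)
    have b2 : BM (fun v : Fin (n + 1 + 1) → Z =>
        2 * ((∑ i : Fin (n + 1), h (v i.castSucc)) * h (v (Fin.last (n + 1))))) :=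
      (BM.const 2).mul ((hS.comp hm1).mul (hh.comp hm2))
    rw [integral_add ((b1.add b2).integrable _) ((hh.comp hm2).sq.integrable _),
      integral_add (b1.integrable _) (b2.integrable _), integral_const_mul,
      chain_step n hS hh, chain_last hinv (n + 1) hh.sq]
    have c1 := chain_step (PiM := PiM) (K := K) n hS.sq (BM.const 1)
    rw [c1]
    simp only [integral_const, probReal_univ, smul_eq_mul, mul_one]
    have i1 := chain_cross hinv h0 h1 ν hmin hh n (hh.kernel K)
      (by rw [inv_integral hinv hh, hm])
    have i3 : √(∫ x, (∫ y, h y ∂(K x)) ^ 2 ∂PiM) ≤ √(∫ x, h x ^ 2 ∂PiM) := by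
      apply Real.sqrt_le_sqrt
      have := contract hinv h0 h1 ν hmin hh hm
      nlinarith
    have i4 : 1 / (1 - √(1 - ξ)) * (√(∫ x, h x ^ 2 ∂PiM) * √(∫ x, (∫ y, h y ∂(K x)) ^ 2 ∂PiM))
      ≤ 1 / (1 - √(1 - ξ)) * (√(∫ x, h x ^ 2 ∂PiM) * √(∫ x, h x ^ 2 ∂PiM)) := by
      gcongr
    rw [Real.mul_self_sqrt hnn] at i4
    have i5 := (le_abs_self _).trans (i1.trans i4)
    have e2 : (2 : ℝ) / (1 - √(1 - ξ)) = 2 * (1 / (1 - √(1 - ξ))) := by ring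
    rw [e2] at ih ⊢
    push_cast
    linarith

end chain

/-- Proposition 3.1, main variance result for the MIMCMC simplified
estimator: for the normalized signed multi-increment `ψ` built from the `2^d` corner
functions, under the boundedness assumptions, (A2′) and (A3), the ergodic average of `ψ`
along the stationary `Π`-reversible Markov chain satisfies
`E[((1/N)∑ψ(Z_j) − T)²] ≤ C max{C₁², C₂², C₁C₂}/N`, with `C` depending only on
`d, C̲, C̄, M, ξ`. -/
theorem mimcmc_variance_main {d : ℕ} (hd : 1 ≤ d) (Cl Cu M ξ : ℝ)
    (hCl : 0 < Cl) (hClCu : Cl ≤ Cu) (hM : 0 ≤ M) (hξ : ξ ∈ Set.Ioo (0 : ℝ) 1) :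
    ∃ C : ℝ,
      ∀ (X : (Fin d → Fin 2) → Type u) (_ : ∀ s, MeasurableSpace (X s))
        (Q : Measure (∀ s, X s)) (_ : IsProbabilityMeasure Q)
        (g : ∀ s, X s → ℝ), (∀ s, Measurable (g s)) →
        (∀ s x, Cl ≤ g s x ∧ g s x ≤ Cu) →
        ∀ G : (∀ s, X s) → ℝ,
          (∀ z, G z = Finset.univ.sup' Finset.univ_nonempty fun s => g s (z s)) →
        ∀ ZG : ℝ, ZG = ∫ z, G z ∂Q →
        ∀ PiM : Measure (∀ s, X s),
          PiM = Q.withDensity (fun z => ENNReal.ofReal (G z / ZG)) →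
        ∀ H : (Fin d → Fin 2) → (∀ s, X s) → ℝ, (∀ s z, H s z = g s (z s) / G z) →
        ∀ φ : ∀ s, X s → ℝ, (∀ s, Measurable (φ s)) → (∀ s x, |φ s x| ≤ M) →
        ∀ ψ : (∀ s, X s) → ℝ,
          (∀ z, ψ z = ∑ s : Fin d → Fin 2,
            (-1 : ℝ) ^ (∑ i, (s i : ℕ)) * (φ s (z s) * H s z) / ∫ z', H s z' ∂PiM) →
        ∀ T : ℝ, T = ∫ z, ψ z ∂PiM →
        ∀ C₁ C₂ : ℝ, 0 ≤ C₁ → 0 ≤ C₂ →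
        (∀ f : (∀ s, X s) → ℝ, Measurable f → (∀ z, |f z| ≤ 1) →
          |∫ z, f z * ψ z ∂Q| ≤ C₁) →
        variance ψ Q ≤ C₂ ^ 2 →
        ∀ K : Kernel (∀ s, X s) (∀ s, X s), IsMarkovKernel K →
        (∀ A B : Set (∀ s, X s), MeasurableSet A → MeasurableSet B →
          ∫⁻ z in A, K z B ∂PiM = ∫⁻ z in B, K z A ∂PiM) →
        ∀ ν : Measure (∀ s, X s), IsProbabilityMeasure ν →
        (∀ z A, MeasurableSet A → ENNReal.ofReal ξ * ν A ≤ K z A) →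
        ∀ P : Measure (ℕ → ∀ s, X s),
          (∀ n : ℕ, P.map (fun ω => fun i : Fin (n + 1) => ω (i : ℕ)) =
            chainFinLaw PiM K n) →
        ∀ N : ℕ, 1 ≤ N →
        ∫ ω, ((1 / (N : ℝ)) * (∑ j ∈ Finset.range N, ψ (ω j)) - T) ^ 2 ∂P ≤
          C * max (max (C₁ ^ 2) (C₂ ^ 2)) (C₁ * C₂) / N := by
  obtain ⟨h0, h1⟩ := hξ
  refine ⟨(1 + 2 / (1 - √(1 - ξ))) * (2 * (Cu / Cl)), ?_⟩
  intro X mX Q hQ g hgm hgb G hG ZG hZG PiM hPi H hH φ hφm hφb ψ hψ T hT C₁ C₂ hC₁ hC₂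
    hA hvar K hK hrev ν hν hmin P hP N hN
  have hCu : 0 < Cu := hCl.trans_le hClCu
  have hr1 : √(1 - ξ) < 1 := by
    rw [Real.sqrt_lt' one_pos]; linarith
  have hr1' : 0 < 1 - √(1 - ξ) := by linarith
  -- properties of `G`
  have hgG : ∀ s z, g s (z s) ≤ G z := fun s z => by
    rw [hG]
    exact Finset.le_sup' (fun s => g s (z s)) (Finset.mem_univ s)
  have hGl : ∀ z, Cl ≤ G z := fun z => (hgb (fun _ => 0) _).1.trans (hgG (fun _ => 0) z)
  have hGu : ∀ z, G z ≤ Cu := fun z => by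
    rw [hG]
    exact Finset.sup'_le _ _ fun s _ => (hgb s _).2
  have hGm : Measurable G := by
    have : G = Finset.univ.sup' Finset.univ_nonempty (fun s z => g s (z s)) := by
      funext z
      rw [hG, Finset.sup'_apply]
    rw [this]
    exact Finset.measurable_sup' _ fun s _ => (hgm s).comp (measurable_pi_apply s)
  have hGB : BM G := ⟨hGm, Cu, fun z => by
    rw [abs_of_nonneg (hCl.le.trans (hGl z))]; exact hGu z⟩
  have hZl : Cl ≤ ZG := by
    rw [hZG]
    have := integral_mono (μ := Q) (integrable_const Cl) (hGB.integrable Q) hGl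
    simpa using this
  have hZ0 : 0 < ZG := hCl.trans_le hZl
  have hdm : Measurable (fun z => ENNReal.ofReal (G z / ZG)) := by fun_prop
  have hPprob : IsProbabilityMeasure PiM := by
    constructor
    rw [hPi, withDensity_apply _ MeasurableSet.univ, Measure.restrict_univ,
      ← ofReal_integral_eq_lintegral_ofReal]
    · rw [integral_div, ← hZG, div_self hZ0.ne', ENNReal.ofReal_one]
    · exact (hGB.integrable Q).div_const _
    · exact Filter.Eventually.of_forall fun z => div_nonneg (hCl.le.trans (hGl z)) hZ0.le
  have hPle : PiM ≤ ENNReal.ofReal (Cu / Cl) • Q := by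
    rw [hPi, ← withDensity_const]
    apply withDensity_mono
    refine Filter.Eventually.of_forall fun z => ENNReal.ofReal_le_ofReal ?_
    exact div_le_div₀ hCu.le (hGu z) hCl hZl
  -- `ψ` is bounded
  have hψB : BM ψ := by
    have : ψ = fun z => ∑ s : Fin d → Fin 2,
        ((-1 : ℝ) ^ (∑ i, (s i : ℕ)) / ∫ z', H s z' ∂PiM) * (φ s (z s) * H s z) := by
      funext z
      rw [hψ]
      exact Finset.sum_congr rfl fun s _ => by ring
    rw [this]
    refine BM.sum _ fun s => (BM.const _).mul (BM.mul ?_ ?_)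
    · exact ⟨(hφm s).comp (measurable_pi_apply s), M, fun z => hφb s _⟩
    · have e : H s = fun z => g s (z s) / G z := funext (hH s)
      rw [e]
      refine ⟨((hgm s).comp (measurable_pi_apply s)).div hGm, 1, fun z => ?_⟩
      have p1 : 0 < g s (z s) := hCl.trans_le (hgb s _).1
      have p2 : 0 < G z := hCl.trans_le (hGl z)
      rw [abs_of_nonneg (div_nonneg p1.le p2.le), div_le_one p2]
      exact hgG s z
  have hinv : PiM.bind K = PiM := by
    ext A hA'
    rw [Measure.bind_apply hA' K.aemeasurable]
    have := hrev Set.univ A MeasurableSet.univ hA'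
    simpa using this
  have hhB : BM (fun z => ψ z - T) := hψB.sub (BM.const T)
  have hmean : ∫ z, (ψ z - T) ∂PiM = 0 := by
    rw [integral_sub (hψB.integrable _) (integrable_const _), ← hT]
    simp
  -- the second moment
  have hsec : ∫ z, (ψ z - T) ^ 2 ∂PiM ≤
      2 * (Cu / Cl) * max (max (C₁ ^ 2) (C₂ ^ 2)) (C₁ * C₂) := by
    have s1 : ∫ z, (ψ z - T) ^ 2 ∂PiM ≤ ∫ z, ψ z ^ 2 ∂PiM := by
      have := variance_le_expectation_sq (μ := PiM) hψB.1.aestronglyMeasurable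
      rw [variance_eq_integral hψB.1.aemeasurable, ← hT] at this
      simpa using this
    have s2 : ∫ z, ψ z ^ 2 ∂PiM ≤ Cu / Cl * ∫ z, ψ z ^ 2 ∂Q := by
      have := integral_mono_measure (f := fun z => ψ z ^ 2) hPle
        (Filter.Eventually.of_forall fun z => sq_nonneg _)
        ((hψB.sq.integrable Q).smul_measure ENNReal.ofReal_ne_top)
      rwa [integral_smul_measure, ENNReal.toReal_ofReal (by positivity), smul_eq_mul] at this
    have s3 : ∫ z, ψ z ^ 2 ∂Q ≤ C₂ ^ 2 + C₁ ^ 2 := by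
      obtain ⟨B, hB⟩ := hψB.2
      have hL : MemLp ψ 2 Q := MemLp.of_bound hψB.1.aestronglyMeasurable B
        (Filter.Eventually.of_forall hB)
      rw [variance_eq_sub hL] at hvar
      have hA1 := hA (fun _ => 1) measurable_const (by simp)
      simp only [one_mul] at hA1
      have := sq_le_sq' (abs_le.1 hA1).1 (abs_le.1 hA1).2
      simp only [Pi.pow_apply] at hvar
      linarith
    have m1 : C₁ ^ 2 ≤ max (max (C₁ ^ 2) (C₂ ^ 2)) (C₁ * C₂) :=
      (le_max_left _ _).trans (le_max_left _ _)
    have m2 : C₂ ^ 2 ≤ max (max (C₁ ^ 2) (C₂ ^ 2)) (C₁ * C₂) :=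
      (le_max_right _ _).trans (le_max_left _ _)
    have s4 : Cu / Cl * ∫ z, ψ z ^ 2 ∂Q ≤
        Cu / Cl * (2 * max (max (C₁ ^ 2) (C₂ ^ 2)) (C₁ * C₂)) := by
      gcongr
      linarith
    linarith
  -- the chain
  obtain ⟨n, rfl⟩ : ∃ n, N = n + 1 := ⟨N - 1, by omega⟩
  have hcv := chain_var hinv h0 h1 ν hmin hhB hmean n
  have hmap : Measurable (fun ω : ℕ → ∀ s, X s => fun i : Fin (n + 1) => ω (i : ℕ)) := by
    fun_prop
  have hSm : BM (fun v : Fin (n + 1) → ∀ s, X s => (∑ i, (ψ (v i) - T)) ^ 2) :=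
    (BM.sum _ fun i => hhB.comp (measurable_pi_apply i)).sq
  rw [← hP n, integral_map hmap.aemeasurable hSm.1.aestronglyMeasurable] at hcv
  have hn0 : (0 : ℝ) < (n : ℝ) + 1 := by positivity
  have e : ∀ ω : ℕ → ∀ s, X s,
      ((1 / ((n + 1 : ℕ) : ℝ)) * (∑ j ∈ Finset.range (n + 1), ψ (ω j)) - T) ^ 2 =
      (1 / ((n : ℝ) + 1) ^ 2) * (∑ i : Fin (n + 1), (ψ (ω (i : ℕ)) - T)) ^ 2 := by
    intro ω
    rw [Finset.sum_sub_distrib, Fin.sum_univ_eq_sum_range (fun j => ψ (ω j)) (n + 1)]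
    simp only [Finset.sum_const, Finset.card_univ, Fintype.card_fin, nsmul_eq_mul]
    push_cast
    field_simp
  simp only [e]
  rw [integral_const_mul]
  have hc0 : 0 ≤ 1 + 2 / (1 - √(1 - ξ)) := by positivity
  have hfin := hcv.trans (mul_le_mul_of_nonneg_left
    (mul_le_mul_of_nonneg_left hsec hc0) hn0.le)
  refine (mul_le_mul_of_nonneg_left hfin (by positivity)).trans (le_of_eq ?_)
  push_cast
  generalize max (max (C₁ ^ 2) (C₂ ^ 2)) (C₁ * C₂) = D
  generalize 1 + 2 / (1 - √(1 - ξ)) = R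
  field_simp
end

section
/- (Proposition 3.2, MIMCMC cost.) Let d ≥ 1, C₀ > 0, and w, β, γ ∈ (0,∞)^d satisfy β_i > γ_i for all i = 1,…,d and ∑_{i=1}^d γ_i / w_i ≤ 2. Then there exists a constant C < ∞, depending only on d, C₀, w, β, γ, such that for every ε ∈ (0,1) there exist L ∈ ℕ^d and integers N_α ≥ 1 for α ∈ I_L with the following property: for every b : ℕ^d → ℝ satisfying |b(α)| ≤ C₀ ∏_{i=1}^d 2^{−w_i α_i} for all α ∈ ℕ^d, and every family D : I_L → [0,∞) with D_α ≤ C₀ ∏_{i=1}^d 2^{−β_i α_i}, one has (∑_{α ∉ I_L} b(α))² + ∑_{α ∈ I_L} D_α / N_α ≤ C ε², while the total cost satisfies ∑_{α ∈ I_L} N_α ∏_{i=1}^d 2^{γ_i α_i} ≤ C ε^{−2}. -/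
/-- Finite sums of products are bounded by products of bounds on one-dimensional sums. -/
lemma aux_sum_prod_le {d : ℕ} (f : Fin d → ℕ → ℝ) (hf : ∀ i a, 0 ≤ f i a) (K : Fin d → ℝ)
    (hK : ∀ i n, ∑ a ∈ Finset.range n, f i a ≤ K i) (S : Finset (Fin d → ℕ)) :
    ∑ α ∈ S, ∏ i, f i (α i) ≤ ∏ i, K i := by
  classical
  let M : Fin d → ℕ := fun i => S.sup (fun α => α i) + 1
  have hS : S ⊆ Fintype.piFinset (fun i => Finset.range (M i)) := by
    intro α hα
    rw [Fintype.mem_piFinset]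
    intro i
    rw [Finset.mem_range]
    exact Nat.lt_succ_of_le (Finset.le_sup (f := fun α : Fin d → ℕ => α i) hα)
  calc ∑ α ∈ S, ∏ i, f i (α i)
      ≤ ∑ α ∈ Fintype.piFinset (fun i => Finset.range (M i)), ∏ i, f i (α i) :=
        Finset.sum_le_sum_of_subset_of_nonneg hS
          (fun α _ _ => Finset.prod_nonneg fun i _ => hf i _)
    _ = ∏ i, ∑ a ∈ Finset.range (M i), f i a := (Finset.prod_univ_sum _ _).symm
    _ ≤ ∏ i, K i := Finset.prod_le_prod
        (fun i _ => Finset.sum_nonneg fun a _ => hf i a) (fun i _ => hK i _)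

lemma aux_pow (x : ℝ) (a : ℕ) : (2 : ℝ) ^ (x * (a : ℝ)) = ((2 : ℝ) ^ x) ^ a := by
  rw [Real.rpow_mul (by norm_num), Real.rpow_natCast]

lemma aux_r_lt {x : ℝ} (hx : 0 < x) : (2 : ℝ) ^ (-x) < 1 :=
  Real.rpow_lt_one_of_one_lt_of_neg (by norm_num) (by linarith)

lemma aux_tail {x : ℝ} (hx : 0 < x) (L n : ℕ) :
    ∑ a ∈ Finset.range n, (if L ≤ a then (2 : ℝ) ^ (-x * (a : ℝ)) else 0)
      ≤ (2 : ℝ) ^ (-x * (L : ℝ)) * (1 - (2 : ℝ) ^ (-x))⁻¹ := by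
  rw [← Finset.sum_filter]
  have h : (Finset.range n).filter (fun a => L ≤ a) = Finset.Ico L n := by
    ext a; simp [and_comm]
  rw [h]
  simp only [aux_pow]
  rw [← div_eq_mul_inv]
  exact geom_sum_Ico_le_of_lt_one (by positivity) (aux_r_lt hx)

lemma aux_geom {x : ℝ} (hx : 0 < x) (n : ℕ) :
    ∑ a ∈ Finset.range n, (2 : ℝ) ^ (-x * (a : ℝ)) ≤ (1 - (2 : ℝ) ^ (-x))⁻¹ := by
  have := aux_tail hx 0 n
  simpa using this

lemma aux_kpos {x : ℝ} (hx : 0 < x) : 0 < (1 - (2 : ℝ) ^ (-x))⁻¹ :=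
  inv_pos.2 (sub_pos.2 (aux_r_lt hx))

lemma aux_bias {d : ℕ} (C₀ : ℝ) (hC₀ : 0 < C₀) (w : Fin d → ℝ) (hw : ∀ i, 0 < w i)
    (ε : ℝ) (L : Fin d → ℕ) (hL : ∀ i, (2 : ℝ) ^ (-(w i) * (L i : ℝ)) ≤ ε)
    (b : (Fin d → ℕ) → ℝ)
    (hb : ∀ α : Fin d → ℕ, |b α| ≤ C₀ * ∏ i, (2 : ℝ) ^ (-(w i) * (α i : ℝ))) :
    |∑' α : {α : Fin d → ℕ // ¬ α ≤ L}, b (α : Fin d → ℕ)|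
      ≤ C₀ * (d * ∏ i, (1 - (2 : ℝ) ^ (-(w i)))⁻¹) * ε := by
  classical
  let u : Fin d → Fin d → ℕ → ℝ := fun i j a =>
    if i = j then (if L j ≤ a then (2 : ℝ) ^ (-(w j) * (a : ℝ)) else 0)
      else (2 : ℝ) ^ (-(w j) * (a : ℝ))
  have hu : ∀ i j a, 0 ≤ u i j a := by
    intro i j a
    simp only [u]
    split_ifs <;> positivity
  have hprod : ∀ i, ∀ S : Finset (Fin d → ℕ), ∑ α ∈ S, ∏ j, u i j (α j)
      ≤ ε * ∏ j, (1 - (2 : ℝ) ^ (-(w j)))⁻¹ := by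
    intro i S
    refine (aux_sum_prod_le (u i) (hu i)
      (fun j => (if i = j then ε else 1) * (1 - (2 : ℝ) ^ (-(w j)))⁻¹) ?_ S).trans ?_
    · intro j n
      by_cases h : i = j
      · simp only [u, h, if_true]
        exact (aux_tail (hw j) (L j) n).trans
          (mul_le_mul_of_nonneg_right (hL j) (aux_kpos (hw j)).le)
      · simp only [u, h, if_false, one_mul]
        exact aux_geom (hw j) n
    · rw [Finset.prod_mul_distrib]
      simp
  have hpt : ∀ α : Fin d → ℕ, ¬ α ≤ L → |b α| ≤ C₀ * ∑ i, ∏ j, u i j (α j) := by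
    intro α hα
    refine (hb α).trans (mul_le_mul_of_nonneg_left ?_ hC₀.le)
    obtain ⟨i, hi⟩ : ∃ i, L i < α i := by
      simpa [Pi.le_def] using hα
    refine le_trans (le_of_eq ?_) (Finset.single_le_sum
      (f := fun i => ∏ j, u i j (α j))
      (fun i _ => Finset.prod_nonneg fun j _ => hu i j _) (Finset.mem_univ i))
    refine Finset.prod_congr rfl fun j _ => ?_
    by_cases h : i = j
    · subst h; simp [u, hi.le]
    · simp [u, h]
  have hfin : ∀ S : Finset {α : Fin d → ℕ // ¬ α ≤ L}, ∑ α ∈ S, ‖b (α : Fin d → ℕ)‖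
      ≤ C₀ * (d * ∏ i, (1 - (2 : ℝ) ^ (-(w i)))⁻¹) * ε := by
    intro S
    calc ∑ α ∈ S, ‖b (α : Fin d → ℕ)‖
        ≤ ∑ α ∈ S, C₀ * ∑ i, ∏ j, u i j ((α : Fin d → ℕ) j) :=
          Finset.sum_le_sum fun α _ => hpt α α.2
      _ = C₀ * ∑ i, ∑ α ∈ S.map (Function.Embedding.subtype _), ∏ j, u i j (α j) := by
          rw [← Finset.mul_sum, Finset.sum_comm]
          simp
      _ ≤ C₀ * ∑ i : Fin d, ε * ∏ j, (1 - (2 : ℝ) ^ (-(w j)))⁻¹ :=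
          mul_le_mul_of_nonneg_left (Finset.sum_le_sum fun i _ => hprod i _) hC₀.le
      _ = _ := by simp; ring
  have hs : Summable fun α : {α : Fin d → ℕ // ¬ α ≤ L} => ‖b (α : Fin d → ℕ)‖ :=
    summable_of_sum_le (fun _ => norm_nonneg _) hfin
  exact (norm_tsum_le_tsum_norm hs).trans (hs.tsum_le_of_sum_le hfin)

/-- Proposition 3.2, MIMCMC cost: under the rate assumptions with
`βᵢ > γᵢ` and `∑ γᵢ/wᵢ ≤ 2`, for every `ε ∈ (0,1)` one can choose levels `L` and numbers
of MCMC steps `N_α ≥ 1` such that for any multi-increments `b` with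
`|b(α)| ≤ C₀ ∏ 2^{−wᵢαᵢ}` and any `D : I_L → [0,∞)` with `D_α ≤ C₀ ∏ 2^{−βᵢαᵢ}`, the
total error `(∑_{α∉I_L} b(α))² + ∑_{α∈I_L} D_α/N_α` is `≤ C ε²`, at total cost
`∑_{α∈I_L} N_α ∏ 2^{γᵢαᵢ} ≤ C ε⁻²`. -/
theorem mimcmc_cost {d : ℕ} (hd : 1 ≤ d) (C₀ : ℝ) (hC₀ : 0 < C₀) (w β γ : Fin d → ℝ)
    (hw : ∀ i, 0 < w i) (hβ : ∀ i, 0 < β i) (hγ : ∀ i, 0 < γ i)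
    (hβγ : ∀ i, γ i < β i) (hsum : ∑ i, γ i / w i ≤ 2) :
    ∃ C : ℝ, ∀ ε : ℝ, ε ∈ Set.Ioo (0 : ℝ) 1 →
      ∃ (L : Fin d → ℕ) (N : (Fin d → ℕ) → ℕ),
        (∀ α ∈ Finset.Iic L, 1 ≤ N α) ∧
        (∀ b : (Fin d → ℕ) → ℝ,
          (∀ α : Fin d → ℕ, |b α| ≤ C₀ * ∏ i, (2 : ℝ) ^ (-(w i) * (α i : ℝ))) →
          ∀ D : (Fin d → ℕ) → ℝ,
          (∀ α ∈ Finset.Iic L,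
            0 ≤ D α ∧ D α ≤ C₀ * ∏ i, (2 : ℝ) ^ (-(β i) * (α i : ℝ))) →
          (∑' α : {α : Fin d → ℕ // ¬ α ≤ L}, b (α : Fin d → ℕ)) ^ 2 +
              ∑ α ∈ Finset.Iic L, D α / (N α : ℝ) ≤ C * ε ^ 2) ∧
        (∑ α ∈ Finset.Iic L, (N α : ℝ) * ∏ i, (2 : ℝ) ^ (γ i * (α i : ℝ)) ≤
          C * ε ^ (-2 : ℤ)) := by
  classical
  set P := C₀ * (d * ∏ i, (1 - (2 : ℝ) ^ (-(w i)))⁻¹) with hP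
  let δ : Fin d → ℝ := fun i => (β i - γ i) / 2
  have hδ : ∀ i, 0 < δ i := fun i => by have := hβγ i; simp only [δ]; linarith
  set K := ∏ i, (1 - (2 : ℝ) ^ (-(δ i)))⁻¹ with hK
  have hK0 : 0 ≤ K := Finset.prod_nonneg fun i _ => (aux_kpos (hδ i)).le
  let c : Fin d → ℝ := fun i => (2 : ℝ) ^ (2 * γ i) / ((2 : ℝ) ^ (γ i) - 1)
  have hg1 : ∀ i, 1 < (2 : ℝ) ^ (γ i) := fun i => Real.one_lt_rpow (by norm_num) (hγ i)
  have hc : ∀ i, 0 ≤ c i := fun i =>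
    div_nonneg (by positivity) (sub_pos.2 (hg1 i)).le
  set Q := ∏ i, c i with hQ
  have hQ0 : 0 ≤ Q := Finset.prod_nonneg fun i _ => hc i
  refine ⟨P ^ 2 + C₀ * K + K + Q, ?_⟩
  rintro ε ⟨hε0, hε1⟩
  set l := Real.logb 2 ε⁻¹ with hl
  have hE : 1 < ε⁻¹ := (one_lt_inv₀ hε0).2 hε1
  have hl0 : 0 < l := Real.logb_pos (by norm_num) hE
  have h2l : (2 : ℝ) ^ l = ε⁻¹ := Real.rpow_logb (by norm_num) (by norm_num) (by positivity)
  let L : Fin d → ℕ := fun i => ⌈l / w i⌉₊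
  let N : (Fin d → ℕ) → ℕ := fun α =>
    ⌈(ε⁻¹) ^ 2 * ∏ i, (2 : ℝ) ^ (-((β i + γ i) / 2) * (α i : ℝ))⌉₊
  have hNpos : ∀ α : Fin d → ℕ,
      0 < (ε⁻¹) ^ 2 * ∏ i, (2 : ℝ) ^ (-((β i + γ i) / 2) * (α i : ℝ)) := fun α =>
    mul_pos (by positivity) (Finset.prod_pos fun i _ => by positivity)
  have hN1 : ∀ α, (ε⁻¹) ^ 2 * ∏ i, (2 : ℝ) ^ (-((β i + γ i) / 2) * (α i : ℝ)) ≤ (N α : ℝ) :=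
    fun α => Nat.le_ceil _
  have hN2 : ∀ α, (N α : ℝ) ≤
      (ε⁻¹) ^ 2 * ∏ i, (2 : ℝ) ^ (-((β i + γ i) / 2) * (α i : ℝ)) + 1 :=
    fun α => (Nat.ceil_lt_add_one (hNpos α).le).le
  have hKsum : ∑ α ∈ Finset.Iic L, ∏ i, (2 : ℝ) ^ (-(δ i) * (α i : ℝ)) ≤ K :=
    aux_sum_prod_le (fun i a => (2 : ℝ) ^ (-(δ i) * (a : ℝ))) (fun i a => by positivity)
      _ (fun i n => aux_geom (hδ i) n) _
  have hLε : ∀ i, (2 : ℝ) ^ (-(w i) * (L i : ℝ)) ≤ ε := by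
    intro i
    have h1 : l / w i ≤ (L i : ℝ) := Nat.le_ceil _
    have h2 : l ≤ w i * L i := by
      rw [div_le_iff₀ (hw i)] at h1; linarith
    calc (2 : ℝ) ^ (-(w i) * (L i : ℝ)) ≤ (2 : ℝ) ^ (-l) :=
          Real.rpow_le_rpow_of_exponent_le (by norm_num) (by linarith)
      _ = ε := by rw [Real.rpow_neg (by norm_num), h2l, inv_inv]
  refine ⟨L, N, ?_, ?_, ?_⟩
  · intro α _
    exact Nat.ceil_pos.2 (hNpos α)
  · intro b hb D hD
    have hbias := aux_bias C₀ hC₀ w hw ε L hLε b hb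
    have h1 : (∑' α : {α : Fin d → ℕ // ¬ α ≤ L}, b (α : Fin d → ℕ)) ^ 2 ≤ P ^ 2 * ε ^ 2 := by
      rw [← sq_abs, ← mul_pow]
      exact pow_le_pow_left₀ (abs_nonneg _) hbias 2
    have h2 : ∑ α ∈ Finset.Iic L, D α / (N α : ℝ) ≤ C₀ * K * ε ^ 2 := by
      calc ∑ α ∈ Finset.Iic L, D α / (N α : ℝ)
          ≤ ∑ α ∈ Finset.Iic L, C₀ * ε ^ 2 * ∏ i, (2 : ℝ) ^ (-(δ i) * (α i : ℝ)) := by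
            refine Finset.sum_le_sum fun α hα => ?_
            have hN0 : (0 : ℝ) < N α := (hNpos α).trans_le (hN1 α)
            rw [div_le_iff₀ hN0]
            refine (hD α hα).2.trans ?_
            refine le_trans (le_of_eq ?_) (mul_le_mul_of_nonneg_left (hN1 α)
              (mul_nonneg (by positivity) (Finset.prod_nonneg fun i _ => by positivity)))
            have : ∏ i, (2 : ℝ) ^ (-(β i) * (α i : ℝ)) =
                (∏ i, (2 : ℝ) ^ (-(δ i) * (α i : ℝ))) *
                  ∏ i, (2 : ℝ) ^ (-((β i + γ i) / 2) * (α i : ℝ)) := by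
              rw [← Finset.prod_mul_distrib]
              refine Finset.prod_congr rfl fun i _ => ?_
              rw [← Real.rpow_add (by norm_num)]
              congr 1
              simp only [δ]; ring
            rw [this]
            field_simp
        _ = C₀ * ε ^ 2 * ∑ α ∈ Finset.Iic L, ∏ i, (2 : ℝ) ^ (-(δ i) * (α i : ℝ)) := by
            rw [Finset.mul_sum]
        _ ≤ C₀ * ε ^ 2 * K := mul_le_mul_of_nonneg_left hKsum (by positivity)
        _ = _ := by ring
    have : 0 ≤ (K + Q) * ε ^ 2 := by positivity
    linarith
  · have hz : ε ^ (-2 : ℤ) = (ε⁻¹) ^ 2 := by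
      rw [zpow_neg, inv_pow]; norm_cast
    rw [hz]
    have hB : ∑ α ∈ Finset.Iic L, ∏ i, (2 : ℝ) ^ (γ i * (α i : ℝ)) ≤ Q * (ε⁻¹) ^ 2 := by
      have hI : Finset.Iic L = Fintype.piFinset (fun i => Finset.range (L i + 1)) := by
        ext α
        simp [Fintype.mem_piFinset, Pi.le_def, Nat.lt_succ_iff]
      rw [hI, ← Finset.prod_univ_sum (fun i => Finset.range (L i + 1))
        (fun i (a : ℕ) => (2 : ℝ) ^ (γ i * (a : ℝ)))]
      calc ∏ i, ∑ a ∈ Finset.range (L i + 1), (2 : ℝ) ^ (γ i * (a : ℝ))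
          ≤ ∏ i, (c i * (2 : ℝ) ^ (γ i / w i * l)) := by
            refine Finset.prod_le_prod
              (fun i _ => Finset.sum_nonneg fun a _ => by positivity) fun i _ => ?_
            simp only [aux_pow]
            rw [geom_sum_eq (hg1 i).ne', ← aux_pow]
            simp only [c]
            rw [div_mul_eq_mul_div, ← Real.rpow_add (by norm_num)]
            have h3 : (L i : ℝ) ≤ l / w i + 1 :=
              (Nat.ceil_lt_add_one (div_pos hl0 (hw i)).le).le
            have h4 : (2 : ℝ) ^ (γ i * ((L i + 1 : ℕ) : ℝ)) ≤
                (2 : ℝ) ^ (2 * γ i + γ i / w i * l) := by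
              refine Real.rpow_le_rpow_of_exponent_le (by norm_num) ?_
              have h5 := mul_le_mul_of_nonneg_left h3 (hγ i).le
              have h6 : γ i * (l / w i) = γ i / w i * l := by ring
              push_cast
              linarith
            refine div_le_div_of_nonneg_right ?_ (sub_pos.2 (hg1 i)).le
            linarith
        _ = Q * (2 : ℝ) ^ ((∑ i, γ i / w i) * l) := by
            rw [Finset.prod_mul_distrib, Finset.sum_mul, Real.rpow_sum_of_pos (by norm_num)]
        _ ≤ Q * (2 : ℝ) ^ (2 * l) := by
            refine mul_le_mul_of_nonneg_left ?_ hQ0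
            exact Real.rpow_le_rpow_of_exponent_le (by norm_num)
              (mul_le_mul_of_nonneg_right hsum hl0.le)
        _ = Q * (ε⁻¹) ^ 2 := by
            rw [mul_comm 2 l, Real.rpow_mul (by norm_num), h2l]
            norm_num
    have hA : ∑ α ∈ Finset.Iic L, (N α : ℝ) * ∏ i, (2 : ℝ) ^ (γ i * (α i : ℝ)) ≤
        (ε⁻¹) ^ 2 * K + Q * (ε⁻¹) ^ 2 := by
      calc _ ≤ ∑ α ∈ Finset.Iic L, ((ε⁻¹) ^ 2 * ∏ i, (2 : ℝ) ^ (-(δ i) * (α i : ℝ)) +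
              ∏ i, (2 : ℝ) ^ (γ i * (α i : ℝ))) := by
            refine Finset.sum_le_sum fun α _ => ?_
            refine (mul_le_mul_of_nonneg_right (hN2 α)
              (Finset.prod_nonneg fun i _ => by positivity)).trans (le_of_eq ?_)
            have : ∏ i, (2 : ℝ) ^ (-(δ i) * (α i : ℝ)) =
                (∏ i, (2 : ℝ) ^ (-((β i + γ i) / 2) * (α i : ℝ))) *
                  ∏ i, (2 : ℝ) ^ (γ i * (α i : ℝ)) := by
              rw [← Finset.prod_mul_distrib]
              refine Finset.prod_congr rfl fun i _ => ?_
              rw [← Real.rpow_add (by norm_num)]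
              congr 1
              simp only [δ]; ring
            rw [this]
            ring
        _ ≤ _ := by
            rw [Finset.sum_add_distrib, ← Finset.mul_sum]
            exact add_le_add (mul_le_mul_of_nonneg_left hKsum (by positivity)) hB
    have : 0 ≤ (P ^ 2 + C₀ * K) * (ε⁻¹) ^ 2 := by positivity
    linarith
end
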